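/- Let p be an odd prime, n ≥ 2, q = p^n, and let K be a field of characteristic p. With A = K[M] the group algebra of M = ZMod q × ZMod q, let P_• be the explicit complex of free A-modules with differential ∂, let α be the σ-semilinear degree-0 map, and let τ be the A-linear degree +1 map given by the explicit formulas. Then for every k and every x ∈ P_k: ∂(τ(x)) + τ(∂(x)) = x − α^{q}(x), where α^{q} denotes the q-fold composite of α (which is A-linear since σ^q = id). -/

import Mathlib

noncomputable section

open MonoidAlgebra Finset

/-- The group `M = ZMod q × ZMod q`, written multiplicatively. -/
abbrev Mgrp (q : ℕ) : Type := Multiplicative (ZMod q × ZMod q)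

/-- The group algebra `A = K[M]`. -/
abbrev GrpAlg (K : Type) [Field K] (q : ℕ) : Type := MonoidAlgebra K (Mgrp q)

variable (K : Type) [Field K] (q : ℕ)

/-- The generator `a = (1,0)` of `M`, as an element of `K[M]`. -/
def aEl : GrpAlg K q := MonoidAlgebra.of K (Mgrp q) (Multiplicative.ofAdd (1, 0))

/-- The generator `b = (0,1)` of `M`, as an element of `K[M]`. -/
def bEl : GrpAlg K q := MonoidAlgebra.of K (Mgrp q) (Multiplicative.ofAdd (0, 1))

/-- `N(x) = ∑_{i=0}^{q−1} x^i`. -/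
def Nel (x : GrpAlg K q) : GrpAlg K q := ∑ i ∈ range q, x ^ i

/-- `ρ = ∑_{0 ≤ j ≤ i ≤ q−1} a^i b^j`. -/
def ρEl : GrpAlg K q :=
  ∑ ij ∈ (range q ×ˢ range q).filter (fun ij => ij.2 ≤ ij.1), aEl K q ^ ij.1 * bEl K q ^ ij.2

/-- `κ = ∑_{i=0}^{q−1} (i+1)·a^i`, with coefficients `(i+1)` taken in `K`. -/
def κEl : GrpAlg K q := ∑ i ∈ range q, ((i : K) + 1) • aEl K q ^ i

/-- The group automorphism `(i,j) ↦ (i, i+j)` of `M` (i.e. `a ↦ ab`, `b ↦ b`). -/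
def sigmaGrp (q : ℕ) : Mgrp q ≃* Mgrp q :=
  AddEquiv.toMultiplicative
    { toFun := fun x => (x.1, x.1 + x.2)
      invFun := fun x => (x.1, x.2 - x.1)
      left_inv := fun x => by simp
      right_inv := fun x => by simp
      map_add' := fun x y => by simp [Prod.ext_iff]; ring }

/-- The `K`-algebra automorphism `σ` of `A = K[M]` induced by the group automorphism
`a ↦ ab`, `b ↦ b` of `M`. -/
def σAlg : GrpAlg K q ≃ₐ[K] GrpAlg K q := MonoidAlgebra.domCongr K K (sigmaGrp q)

/-- `P_k`: the free `A`-module with basis `e_0^k, …, e_k^k`. -/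
abbrev PmodV (k : ℕ) : Type := Fin (k + 1) → GrpAlg K q

/-- The basis element `e_j^k` of `P_k`, indexed by `j : ℤ`, with the convention that
`e_j^k = 0` when `j < 0` or `j > k`. -/
def eZ (k : ℕ) (j : ℤ) : PmodV K q k :=
  if h : 0 ≤ j ∧ j < (k : ℤ) + 1 then Pi.single (⟨j.toNat, by omega⟩ : Fin (k + 1)) 1 else 0

/-- The image under the differential `∂ : P_{k+1} → P_k` of the basis element
`e_idx^{k+1}`, following the parity of the degree `k+1` and of the index `idx`:
`∂(e_{2j}^{2i}) = N(a)·e_{2j}^{2i−1} + N(b)·e_{2j−1}^{2i−1}`,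
`∂(e_{2j+1}^{2i}) = (a−1)·e_{2j+1}^{2i−1} − (b−1)·e_{2j}^{2i−1}`,
`∂(e_{2j}^{2i+1}) = (a−1)·e_{2j}^{2i} − N(b)·e_{2j−1}^{2i}`,
`∂(e_{2j+1}^{2i+1}) = N(a)·e_{2j+1}^{2i} + (b−1)·e_{2j}^{2i}`. -/
def delB (k idx : ℕ) : PmodV K q k :=
  if (k + 1) % 2 = 0 then
    if idx % 2 = 0 then
      Nel K q (aEl K q) • eZ K q k (idx : ℤ) + Nel K q (bEl K q) • eZ K q k ((idx : ℤ) - 1)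
    else
      (aEl K q - 1) • eZ K q k (idx : ℤ) - (bEl K q - 1) • eZ K q k ((idx : ℤ) - 1)
  else
    if idx % 2 = 0 then
      (aEl K q - 1) • eZ K q k (idx : ℤ) - Nel K q (bEl K q) • eZ K q k ((idx : ℤ) - 1)
    else
      Nel K q (aEl K q) • eZ K q k (idx : ℤ) + (bEl K q - 1) • eZ K q k ((idx : ℤ) - 1)

/-- The `A`-linear differential `∂ : P_{k+1} → P_k`. -/
def delMap (k : ℕ) (x : PmodV K q (k + 1)) : PmodV K q k :=
  ∑ j : Fin (k + 2), x j • delB K q k j.val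

/-- The image under `α : P_d → P_d` of the basis element `e_idx^d`:
`α(e_{2j}^{2i}) = ∑_{j ≤ m ≤ i} C(m,j)·(e_{2m}^{2i} − ρ·e_{2m+1}^{2i})`,
`α(e_{2j+1}^{2i}) = ∑_{j ≤ m ≤ i} C(m,j)·b·e_{2m+1}^{2i}`,
`α(e_{2j}^{2i+1}) = ∑_{j ≤ m ≤ i} C(m,j)·(b·e_{2m}^{2i+1} + e_{2m+1}^{2i+1})`,
`α(e_{2j+1}^{2i+1}) = ∑_{j ≤ m ≤ i} C(m,j)·e_{2m+1}^{2i+1}`,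
with binomial coefficients taken in `K`. -/
def alphaB (d idx : ℕ) : PmodV K q d :=
  if d % 2 = 0 then
    if idx % 2 = 0 then
      ∑ m ∈ Finset.Icc (idx / 2) (d / 2), (m.choose (idx / 2) : K) •
        (eZ K q d (2 * m : ℕ) - ρEl K q • eZ K q d ((2 * m : ℕ) + 1))
    else
      ∑ m ∈ Finset.Icc (idx / 2) (d / 2), (m.choose (idx / 2) : K) •
        (bEl K q • eZ K q d ((2 * m : ℕ) + 1))
  else
    if idx % 2 = 0 then
      ∑ m ∈ Finset.Icc (idx / 2) (d / 2), (m.choose (idx / 2) : K) •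
        (bEl K q • eZ K q d (2 * m : ℕ) + eZ K q d ((2 * m : ℕ) + 1))
    else
      ∑ m ∈ Finset.Icc (idx / 2) (d / 2), (m.choose (idx / 2) : K) •
        eZ K q d ((2 * m : ℕ) + 1)

/-- The `σ`-semilinear map `α : P_d → P_d` (it satisfies `α(λ·x) = σ(λ)·α(x)`). -/
def alphaMap (d : ℕ) (x : PmodV K q d) : PmodV K q d :=
  ∑ j : Fin (d + 1), σAlg K q (x j) • alphaB K q d j.val

/-- The image under `τ : P_d → P_{d+1}` of the basis element `e_idx^d`:
`τ(e_{2j}^{2i}) = −(j+1)·κ·e_{2j+2}^{2i+1}`, `τ(e_{2j+1}^{2i}) = −(j+1)·e_{2j+3}^{2i+1}`,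
`τ(e_{2j}^{2i+1}) = −(j+1)·e_{2j+2}^{2i+2}`, `τ(e_{2j+1}^{2i+1}) = −(j+1)·κ·e_{2j+3}^{2i+2}`,
with the coefficients `j+1` taken in `K`. -/
def tauB (d idx : ℕ) : PmodV K q (d + 1) :=
  if d % 2 = 0 then
    if idx % 2 = 0 then
      -(((idx / 2 : ℕ) + 1 : K) • (κEl K q • eZ K q (d + 1) ((idx : ℤ) + 2)))
    else
      -(((idx / 2 : ℕ) + 1 : K) • eZ K q (d + 1) ((idx : ℤ) + 2))
  else
    if idx % 2 = 0 then
      -(((idx / 2 : ℕ) + 1 : K) • eZ K q (d + 1) ((idx : ℤ) + 2))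
    else
      -(((idx / 2 : ℕ) + 1 : K) • (κEl K q • eZ K q (d + 1) ((idx : ℤ) + 2)))

/-- The `A`-linear map `τ : P_d → P_{d+1}`. -/
def tauMap (d : ℕ) (x : PmodV K q d) : PmodV K q (d + 1) :=
  ∑ j : Fin (d + 1), x j • tauB K q d j.val

/-!
Group the basis elements of `P_d` into pairs `e_{2m}^d, e_{2m+1}^d`. With respect to these pairs `α`
is the Pascal matrix `(C(l,m))` tensored with a `σ`-semilinear map of `A²` having a lower
triangular matrix. The `q`-th power of the Pascal matrix has entries `q^{l-m} C(l,m)`, so it is the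
identity because `q = 0` in `K`, and the `q`-th power of the triangular part is unipotent with
off-diagonal entry `-κ N(b)` in even and `N(b)` in odd degrees. In `∂τ + τ∂` the contributions to
the pair `m + 1` cancel because `(a - 1) κ = -N(a)`, while those to the pair `m` carry the factor
`(m + 1) - m = 1` and leave exactly the negative of that off-diagonal entry.
-/

section Pascal

open Polynomial

lemma sum_Icc_choose_smul {R P : Type*} [Semiring R] [AddCommMonoid P] [Module R P]
    (m i : ℕ) (v : ℕ → P) :
    ∑ l ∈ Icc m i, (l.choose m : R) • v l = ∑ l ∈ range (i + 1), (l.choose m : R) • v l := by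
  refine sum_subset (fun l hl ↦ by simp_all) fun l hl hlm ↦ ?_
  have hlt : l < m := by simp_all
  rw [Nat.choose_eq_zero_of_lt hlt, Nat.cast_zero, zero_smul]

variable {R : Type*} [CommSemiring R]

lemma sum_coeff_X_add_C_pow_mul_choose (t : R) (m : ℕ) {l N : ℕ} (hl : l < N) :
    ∑ k ∈ range N, ((X + C t) ^ k).coeff m * (l.choose k : R) =
      ((X + C (t + 1)) ^ l).coeff m := by
  have hsub : range (l + 1) ⊆ range N := range_subset_range.mpr hl
  rw [C_add, C_1, ← add_assoc, add_pow, finsetSum_coeff]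
  simp only [one_pow, mul_one, coeff_mul_natCast]
  refine (sum_subset hsub fun k _ hk ↦ ?_).symm
  rw [Nat.choose_eq_zero_of_lt (by simpa using hk), Nat.cast_zero, mul_zero]

variable {P W : Type*} [AddCommMonoid P] [Module R P] {f : P →ₗ[R] P} {T : W → W}
  {φ : ℕ → W → P} {N : ℕ}

-- The Pascal matrix represents `X ^ l ↦ (X + 1) ^ l`, so its `n`-th power represents
-- `X ^ l ↦ (X + n) ^ l`.
lemma iterate_apply_of_pascal
    (hf : ∀ m < N, ∀ w, f (φ m w) = ∑ l ∈ range N, (l.choose m : R) • φ l (T w))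
    (n : ℕ) {m : ℕ} (hm : m < N) (w : W) :
    f^[n] (φ m w) = ∑ l ∈ range N, ((X + C (n : R)) ^ l).coeff m • φ l (T^[n] w) := by
  induction n with
  | zero => simp [coeff_X_pow, hm]
  | succ n ih =>
    have hstep (k : ℕ) (hk : k ∈ range N) :
        f (((X + C (n : R)) ^ k).coeff m • φ k (T^[n] w)) =
          ∑ l ∈ range N, (((X + C (n : R)) ^ k).coeff m * (l.choose k : R)) •
            φ l (T^[n + 1] w) := by
      rw [map_smul, hf k (mem_range.mp hk), smul_sum, Function.iterate_succ_apply']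
      simp only [smul_smul]
    rw [Function.iterate_succ_apply', ih, map_sum, sum_congr rfl hstep, sum_comm]
    refine sum_congr rfl fun l hl ↦ ?_
    rw [← sum_smul, sum_coeff_X_add_C_pow_mul_choose _ _ (mem_range.mp hl), Nat.cast_succ]

lemma iterate_apply_of_pascal_of_cast_eq_zero
    (hf : ∀ m < N, ∀ w, f (φ m w) = ∑ l ∈ range N, (l.choose m : R) • φ l (T w))
    {n : ℕ} (hn : (n : R) = 0) {m : ℕ} (hm : m < N) (w : W) :
    f^[n] (φ m w) = φ m (T^[n] w) := by
  simp [iterate_apply_of_pascal hf n hm, hn, coeff_X_pow, hm]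

end Pascal

section Ring

lemma sum_pow_range_mul_of_pow_eq_one {R : Type*} [Semiring R] {x : R} {n : ℕ} (hx : x ^ n = 1)
    (m : ℕ) : ∑ t ∈ range (n * m), x ^ t = m * ∑ t ∈ range n, x ^ t := by
  induction m with
  | zero => simp
  | succ m ih => simp [Nat.mul_succ, sum_range_add, ih, pow_add, pow_mul, hx, add_mul]

lemma sub_one_mul_sum_succ_mul_pow {R : Type*} [Ring R] (x : R) (n : ℕ) :
    (x - 1) * ∑ i ∈ range n, ((i : R) + 1) * x ^ i = n * x ^ n - ∑ i ∈ range n, x ^ i := by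
  induction n with
  | zero => simp
  | succ n ih =>
    have hcomm : x * ((n + 1) * x ^ n) = (n + 1) * x ^ (n + 1) := by
      rw [← Nat.cast_succ, (Nat.commute_cast x (n + 1)).left_comm, ← pow_succ']
    rw [sum_range_succ, mul_add, ih, sub_one_mul, hcomm, sum_range_succ, Nat.cast_succ,
      add_one_mul (n : R) (x ^ n)]
    abel

variable {R F : Type*} [CommSemiring R] [FunLike F R R] [RingHomClass F R R]

/-- The `σ`-semilinear endomorphism of `R²` with lower triangular matrix `!![r, 0; g, s]`; on each
pair `e_{2m}^d, e_{2m+1}^d` of basis elements, `α` is such a map tensored with a Pascal matrix. -/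
def triangularTwist (σ : F) (r g s : R) (w : R × R) : R × R :=
  (r * σ w.1, g * σ w.1 + s * σ w.2)

lemma iterate_triangularTwist {σ : F} {r g s : R} (hr : σ r = r) (hs : σ s = s)
    {c : ℕ → R} (c_zero : c 0 = 0) (c_succ : ∀ n, c (n + 1) = g * r ^ n + s * σ (c n))
    (n : ℕ) (w : R × R) :
    (triangularTwist σ r g s)^[n] w =
      (r ^ n * σ^[n] w.1, c n * σ^[n] w.1 + s ^ n * σ^[n] w.2) := by
  induction n with
  | zero => simp [c_zero]
  | succ n ih =>
    simp only [Function.iterate_succ_apply', ih, triangularTwist, map_add, map_mul, map_pow, hr,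
      hs, c_succ, Prod.mk.injEq]
    constructor <;> ring

end Ring

section GroupAlgebra

variable {K q}

lemma bEl_pow_self : bEl K q ^ q = 1 := by
  rw [bEl, ← map_pow, ← ofAdd_nsmul]
  simp [one_def, Prod.mk_zero_zero]

lemma σAlg_aEl : σAlg K q (aEl K q) = aEl K q * bEl K q := by
  simp [σAlg, aEl, bEl, sigmaGrp, single_mul_single, ← ofAdd_add]

lemma σAlg_bEl : σAlg K q (bEl K q) = bEl K q := by
  simp [σAlg, bEl, sigmaGrp]

lemma sigmaGrp_iterate (n : ℕ) (x y : ZMod q) :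
    (sigmaGrp q)^[n] (.ofAdd (x, y)) = .ofAdd (x, n * x + y) := by
  induction n with
  | zero => simp
  | succ n ih =>
    have hadd : x + (n * x + y) = (n + 1 : ℕ) * x + y := by push_cast; ring
    rw [Function.iterate_succ_apply', ih, ← hadd]
    rfl

lemma sigmaGrp_pow_self : (sigmaGrp q : MulAut (Mgrp q)) ^ q = 1 := by
  refine MulEquiv.ext fun x ↦ ?_
  rw [hom_coe_pow (DFunLike.coe (F := MulAut (Mgrp q))) rfl fun _ _ ↦ rfl]
  simpa using sigmaGrp_iterate q x.toAdd.1 x.toAdd.2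

lemma σAlg_iterate_self (x : GrpAlg K q) : (σAlg K q)^[q] x = x := by
  have h : domCongrAut (R := K) (A := K) (sigmaGrp q : MulAut (Mgrp q)) ^ q = 1 := by
    rw [← map_pow, sigmaGrp_pow_self, map_one]
  rw [← AlgEquiv.coe_pow]
  exact DFunLike.congr_fun h x

lemma aEl_sub_one_mul_κEl (hq : (q : K) = 0) :
    (aEl K q - 1) * κEl K q = -Nel K q (aEl K q) := by
  have hqA : (q : GrpAlg K q) = 0 := by
    rw [← map_natCast (algebraMap K (GrpAlg K q)), hq, map_zero]
  have hκ : κEl K q = ∑ i ∈ range q, ((i : GrpAlg K q) + 1) * aEl K q ^ i := by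
    simp only [κEl, Algebra.smul_def, map_add, map_natCast, map_one]
  rw [hκ, sub_one_mul_sum_succ_mul_pow, hqA, zero_mul, zero_sub, Nel]

variable (K q) in
/-- The elements `ρ_n = ∑_{i<q} a^i (1 + b + ⋯ + b^{n(i+1)-1})`, which interpolate between
`ρ_1 = ρ` and `ρ_q = κ N(b)`; in even degrees `-ρ_n` is the off-diagonal entry of `α^n`. -/
def rhoIter (n : ℕ) : GrpAlg K q :=
  ∑ i ∈ range q, aEl K q ^ i * ∑ t ∈ range (n * (i + 1)), bEl K q ^ t

lemma rhoIter_one : rhoIter K q 1 = ρEl K q := by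
  rw [rhoIter, ρEl, sum_filter, sum_product]
  refine sum_congr rfl fun i hi ↦ ?_
  have hfilter : {j ∈ range q | j ≤ i} = range (1 * (i + 1)) := by
    ext j
    simp only [mem_filter, mem_range] at hi ⊢
    omega
  rw [← sum_filter, mul_sum, hfilter]

lemma rhoIter_succ (n : ℕ) :
    rhoIter K q (n + 1) = ρEl K q + bEl K q * σAlg K q (rhoIter K q n) := by
  simp only [← rhoIter_one, rhoIter, map_sum, map_mul, map_pow, σAlg_aEl, σAlg_bEl, one_mul]
  rw [mul_sum, ← sum_add_distrib]
  refine sum_congr rfl fun i _ ↦ ?_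
  rw [add_one_mul n, add_comm, sum_range_add]
  simp only [pow_add _ (i + 1), ← mul_sum]
  ring

lemma rhoIter_self : rhoIter K q q = κEl K q * Nel K q (bEl K q) := by
  simp only [rhoIter, sum_pow_range_mul_of_pow_eq_one bEl_pow_self, κEl, Nel, sum_mul]
  refine sum_congr rfl fun i _ ↦ ?_
  rw [Algebra.smul_def, map_add, map_natCast, map_one, Nat.cast_succ]
  ring

end GroupAlgebra

section Complex

variable {K q} {d k : ℕ}

lemma eZ_of_neg {j : ℤ} (hj : j < 0) : eZ K q d j = 0 :=
  dif_neg (by lia)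

lemma eZ_of_lt {j : ℤ} (hj : d < j) : eZ K q d j = 0 :=
  dif_neg (by lia)

lemma eZ_natCast_val (j : Fin (d + 1)) : eZ K q d (j : ℕ) = Pi.single j 1 :=
  dif_pos ⟨Int.natCast_nonneg _, mod_cast j.isLt⟩

lemma eq_sum_smul_eZ (x : PmodV K q d) : x = ∑ j : Fin (d + 1), x j • eZ K q d (j : ℕ) := by
  simpa only [eZ_natCast_val] using pi_eq_sum_univ' x

lemma sum_apply_eZ_smul {N : Type*} [AddCommMonoid N] [Module (GrpAlg K q) N]
    (s : GrpAlg K q →+ GrpAlg K q) {B : ℕ → N} {j : ℕ} (hB : d < j → B j = 0)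
    (x : GrpAlg K q) :
    ∑ i : Fin (d + 1), s ((x • eZ K q d j) i) • B i = s x • B j := by
  by_cases hj : j < d + 1
  · rw [eZ_natCast_val ⟨j, hj⟩, sum_eq_single ⟨j, hj⟩]
    · simp
    · intro i _ hi
      simp [hi]
    · simp
  · have he : eZ K q d j = 0 := eZ_of_lt (by lia)
    simp [he, hB (by lia)]

variable (K q) in
/-- The differential `∂ : P_{k+1} → P_k` as an `A`-linear map. -/
def delLin (k : ℕ) : PmodV K q (k + 1) →ₗ[GrpAlg K q] PmodV K q k where
  toFun := delMap K q k
  map_add' x y := by simp only [delMap, Pi.add_apply, add_smul, sum_add_distrib]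
  map_smul' c x := by
    simp only [delMap, Pi.smul_apply, smul_eq_mul, mul_smul, smul_sum, RingHom.id_apply]

variable (K q) in
/-- The homotopy `τ : P_d → P_{d+1}` as an `A`-linear map. -/
def tauLin (d : ℕ) : PmodV K q d →ₗ[GrpAlg K q] PmodV K q (d + 1) where
  toFun := tauMap K q d
  map_add' x y := by simp only [tauMap, Pi.add_apply, add_smul, sum_add_distrib]
  map_smul' c x := by
    simp only [tauMap, Pi.smul_apply, smul_eq_mul, mul_smul, smul_sum, RingHom.id_apply]

variable (K q) in
/-- The `σ`-semilinear map `α : P_d → P_d`, regarded only as a `K`-linear map so that its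
iterates are of the same kind. -/
def alphaLin (d : ℕ) : PmodV K q d →ₗ[K] PmodV K q d where
  toFun := alphaMap K q d
  map_add' x y := by simp only [alphaMap, Pi.add_apply, map_add, add_smul, sum_add_distrib]
  map_smul' c x := by
    simp only [alphaMap, Pi.smul_apply, map_smul, smul_assoc, smul_sum, RingHom.id_apply]

variable (K q) in
lemma delLin_eZ (k j : ℕ) : delLin K q k (eZ K q (k + 1) j) = delB K q k j := by
  have hB (hj : k + 1 < j) : delB K q k j = 0 := by
    have he : eZ K q k j = 0 := eZ_of_lt (by lia)
    have he' : eZ K q k (j - 1) = 0 := eZ_of_lt (by lia)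
    simp [delB, he, he']
  simpa using! sum_apply_eZ_smul (.id (GrpAlg K q)) hB 1

variable (K q) in
lemma tauLin_eZ (d j : ℕ) : tauLin K q d (eZ K q d j) = tauB K q d j := by
  have hB (hj : d < j) : tauB K q d j = 0 := by
    have he : eZ K q (d + 1) (j + 2) = 0 := eZ_of_lt (by lia)
    simp [tauB, he]
  simpa using! sum_apply_eZ_smul (.id (GrpAlg K q)) hB 1

lemma alphaLin_smul_eZ (x : GrpAlg K q) (d j : ℕ) :
    alphaLin K q d (x • eZ K q d j) = σAlg K q x • alphaB K q d j := by
  refine sum_apply_eZ_smul (σAlg K q : GrpAlg K q →+ GrpAlg K q) (fun hj ↦ ?_) x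
  obtain hj' | hj' := lt_or_ge (d / 2) (j / 2)
  · simp [alphaB, Icc_eq_empty_of_lt hj']
  · have hd : d % 2 = 0 := by lia
    have hjodd : j % 2 ≠ 0 := by lia
    have hje : d / 2 = j / 2 := by lia
    have he : eZ K q d ((2 * (j / 2) : ℕ) + 1) = 0 := eZ_of_lt (by lia)
    simp only [alphaB, hd, hjodd, hje, if_true, if_false, Icc_self, sum_singleton, he, smul_zero]

variable (K q) in
/-- The map `A² → P_d` onto the span of the pair `e_{2m}^d, e_{2m+1}^d`, in terms of which all the
maps of the complex are explicit; `m` ranges over `ℤ` since `∂` lowers it and `e_j^d = 0` for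
`j < 0`. -/
def block (d : ℕ) (m : ℤ) : GrpAlg K q × GrpAlg K q →ₗ[GrpAlg K q] PmodV K q d :=
  (LinearMap.toSpanSingleton _ _ (eZ K q d (2 * m))).coprod
    (LinearMap.toSpanSingleton _ _ (eZ K q d (2 * m + 1)))

lemma block_apply (m : ℤ) (w : GrpAlg K q × GrpAlg K q) :
    block K q d m w = w.1 • eZ K q d (2 * m) + w.2 • eZ K q d (2 * m + 1) := rfl

lemma block_of_neg {m : ℤ} (hm : m < 0) : block K q d m = 0 := by
  ext <;> simp [block_apply, eZ_of_neg (show 2 * m < 0 by lia),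
    eZ_of_neg (show 2 * m + 1 < 0 by lia)]

lemma block_of_lt {m : ℤ} (hm : d < 2 * m) : block K q d m = 0 := by
  ext <;> simp [block_apply, eZ_of_lt hm, eZ_of_lt (show (d : ℤ) < 2 * m + 1 by lia)]

lemma block_induction {motive : PmodV K q d → Prop}
    (add : ∀ x y, motive x → motive y → motive (x + y))
    (block : ∀ m : ℕ, m ≤ d / 2 → ∀ w, motive (block K q d m w)) (x : PmodV K q d) :
    motive x := by
  have hzero : motive 0 := by simpa using block 0 (Nat.zero_le _) 0
  rw [eq_sum_smul_eZ x]
  refine sum_induction _ motive add hzero fun ⟨j, hj⟩ _ ↦ ?_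
  obtain ⟨m, rfl | rfl⟩ := j.even_or_odd'
  · simpa [block_apply] using block m (by lia) (x ⟨2 * m, hj⟩, 0)
  · simpa [block_apply] using block m (by lia) (0, x ⟨2 * m + 1, hj⟩)

lemma delLin_block_of_odd (hk : Odd k) (m : ℤ) (w : GrpAlg K q × GrpAlg K q) :
    delLin K q k (block K q (k + 1) m w) =
      block K q k m (Nel K q (aEl K q) * w.1 - (bEl K q - 1) * w.2, (aEl K q - 1) * w.2) +
        block K q k (m - 1) (0, Nel K q (bEl K q) * w.1) := by
  obtain hm | hm := lt_or_ge m 0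
  · simp [block_of_neg hm, block_of_neg (show m - 1 < 0 by lia)]
  lift m to ℕ using hm
  have heven := delLin_eZ K q k (2 * m)
  have hodd := delLin_eZ K q k (2 * m + 1)
  rw [delB, if_pos (by grind), if_pos (by lia)] at heven
  rw [delB, if_pos (by grind), if_neg (by lia)] at hodd
  push_cast at heven hodd
  simp only [block_apply, map_add, map_smul, heven, hodd, zero_smul]
  rw [show 2 * ((m : ℤ) - 1) + 1 = 2 * m - 1 by ring, add_sub_cancel_right]
  module

lemma delLin_block_of_even (hk : Even k) (m : ℤ) (w : GrpAlg K q × GrpAlg K q) :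
    delLin K q k (block K q (k + 1) m w) =
      block K q k m ((aEl K q - 1) * w.1 + (bEl K q - 1) * w.2, Nel K q (aEl K q) * w.2) -
        block K q k (m - 1) (0, Nel K q (bEl K q) * w.1) := by
  obtain hm | hm := lt_or_ge m 0
  · simp [block_of_neg hm, block_of_neg (show m - 1 < 0 by lia)]
  lift m to ℕ using hm
  have heven := delLin_eZ K q k (2 * m)
  have hodd := delLin_eZ K q k (2 * m + 1)
  rw [delB, if_neg (by grind), if_pos (by lia)] at heven
  rw [delB, if_neg (by grind), if_neg (by lia)] at hodd
  push_cast at heven hodd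
  simp only [block_apply, map_add, map_smul, heven, hodd, zero_smul]
  rw [show 2 * ((m : ℤ) - 1) + 1 = 2 * m - 1 by ring, add_sub_cancel_right]
  module

lemma tauLin_block_of_even (hd : Even d) (m : ℤ) (w : GrpAlg K q × GrpAlg K q) :
    tauLin K q d (block K q d m w) =
      -(m + 1) • block K q (d + 1) (m + 1) (κEl K q * w.1, w.2) := by
  obtain hm | hm := lt_or_ge m 0
  · obtain rfl | hm' := eq_or_ne m (-1)
    · simp [block_of_neg hm]
    · simp [block_of_neg hm, block_of_neg (show m + 1 < 0 by lia)]
  lift m to ℕ using hm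
  have heven := tauLin_eZ K q d (2 * m)
  have hodd := tauLin_eZ K q d (2 * m + 1)
  rw [tauB, if_pos (by grind), if_pos (by lia)] at heven
  rw [tauB, if_pos (by grind), if_neg (by lia)] at hodd
  push_cast at heven hodd
  simp only [block_apply, map_add, map_smul, heven, hodd]
  rw [show 2 * ((m : ℤ) + 1) = 2 * m + 2 by ring, show 2 * (m : ℤ) + 1 + 2 = 2 * m + 2 + 1 by ring,
    show 2 * m / 2 = m by lia, show (2 * m + 1) / 2 = m by lia]
  module

lemma tauLin_block_of_odd (hd : Odd d) (m : ℤ) (w : GrpAlg K q × GrpAlg K q) :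
    tauLin K q d (block K q d m w) =
      -(m + 1) • block K q (d + 1) (m + 1) (w.1, κEl K q * w.2) := by
  obtain hm | hm := lt_or_ge m 0
  · obtain rfl | hm' := eq_or_ne m (-1)
    · simp [block_of_neg hm]
    · simp [block_of_neg hm, block_of_neg (show m + 1 < 0 by lia)]
  lift m to ℕ using hm
  have heven := tauLin_eZ K q d (2 * m)
  have hodd := tauLin_eZ K q d (2 * m + 1)
  rw [tauB, if_neg (by grind), if_pos (by lia)] at heven
  rw [tauB, if_neg (by grind), if_neg (by lia)] at hodd
  push_cast at heven hodd
  simp only [block_apply, map_add, map_smul, heven, hodd]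
  rw [show 2 * ((m : ℤ) + 1) = 2 * m + 2 by ring, show 2 * (m : ℤ) + 1 + 2 = 2 * m + 2 + 1 by ring,
    show 2 * m / 2 = m by lia, show (2 * m + 1) / 2 = m by lia]
  module

lemma delLin_tauLin_add_tauLin_delLin_block_of_odd (hq : (q : K) = 0) (hk : Odd k) (m : ℤ)
    (w : GrpAlg K q × GrpAlg K q) :
    delLin K q (k + 1) (tauLin K q (k + 1) (block K q (k + 1) m w)) +
        tauLin K q k (delLin K q k (block K q (k + 1) m w)) =
      block K q (k + 1) m (0, κEl K q * Nel K q (bEl K q) * w.1) := by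
  rw [tauLin_block_of_even hk.add_one, map_zsmul, delLin_block_of_even hk.add_one,
    delLin_block_of_odd hk, map_add, tauLin_block_of_odd hk, tauLin_block_of_odd hk,
    ← neg_eq_iff_eq_neg.mpr (aEl_sub_one_mul_κEl hq)]
  simp only [block_apply, add_sub_cancel_right, sub_add_cancel]
  module

lemma delLin_tauLin_add_tauLin_delLin_block_of_even (hq : (q : K) = 0) (hk : Even k) (m : ℤ)
    (w : GrpAlg K q × GrpAlg K q) :
    delLin K q (k + 1) (tauLin K q (k + 1) (block K q (k + 1) m w)) +
        tauLin K q k (delLin K q k (block K q (k + 1) m w)) =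
      block K q (k + 1) m (0, -(Nel K q (bEl K q) * w.1)) := by
  rw [tauLin_block_of_odd hk.add_one, map_zsmul, delLin_block_of_odd hk.add_one,
    delLin_block_of_even hk, map_sub, tauLin_block_of_even hk, tauLin_block_of_even hk,
    ← neg_eq_iff_eq_neg.mpr (aEl_sub_one_mul_κEl hq)]
  simp only [block_apply, add_sub_cancel_right, sub_add_cancel]
  module

lemma alphaLin_block (m : ℕ) (w : GrpAlg K q × GrpAlg K q) :
    alphaLin K q d (block K q d m w) =
      σAlg K q w.1 • alphaB K q d (2 * m) + σAlg K q w.2 • alphaB K q d (2 * m + 1) := by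
  rw [← alphaLin_smul_eZ, ← alphaLin_smul_eZ, ← map_add, block_apply]
  push_cast
  rfl

lemma alphaLin_block_of_even (hd : Even d) (m : ℕ) (w : GrpAlg K q × GrpAlg K q) :
    alphaLin K q d (block K q d m w) = ∑ l ∈ range (d / 2 + 1), (l.choose m : K) •
      block K q d l (triangularTwist (σAlg K q) 1 (-ρEl K q) (bEl K q) w) := by
  have hd' : d % 2 = 0 := by grind
  simp only [alphaLin_block, alphaB, if_pos hd', if_pos (show 2 * m % 2 = 0 by lia),
    if_neg (show (2 * m + 1) % 2 ≠ 0 by lia), show 2 * m / 2 = m by lia,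
    show (2 * m + 1) / 2 = m by lia, sum_Icc_choose_smul, smul_sum, ← sum_add_distrib]
  refine sum_congr rfl fun l _ ↦ ?_
  simp only [block_apply, triangularTwist]
  push_cast
  module

lemma alphaLin_block_of_odd (hd : Odd d) (m : ℕ) (w : GrpAlg K q × GrpAlg K q) :
    alphaLin K q d (block K q d m w) = ∑ l ∈ range (d / 2 + 1), (l.choose m : K) •
      block K q d l (triangularTwist (σAlg K q) (bEl K q) 1 1 w) := by
  have hd' : d % 2 ≠ 0 := by grind
  simp only [alphaLin_block, alphaB, if_neg hd', if_pos (show 2 * m % 2 = 0 by lia),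
    if_neg (show (2 * m + 1) % 2 ≠ 0 by lia), show 2 * m / 2 = m by lia,
    show (2 * m + 1) / 2 = m by lia, sum_Icc_choose_smul, smul_sum, ← sum_add_distrib]
  refine sum_congr rfl fun l _ ↦ ?_
  simp only [block_apply, triangularTwist]
  push_cast
  module

lemma alphaLin_iterate_block_of_even (hq : (q : K) = 0) (hd : Even d) {m : ℕ} (hm : m ≤ d / 2)
    (w : GrpAlg K q × GrpAlg K q) :
    (alphaLin K q d)^[q] (block K q d m w) =
      block K q d m (w.1, w.2 - κEl K q * Nel K q (bEl K q) * w.1) := by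
  have h := iterate_apply_of_pascal_of_cast_eq_zero (φ := fun l ↦ block K q d l)
    (fun m _ ↦ alphaLin_block_of_even hd m) hq (Nat.lt_succ_of_le hm) w
  rw [iterate_triangularTwist (map_one _) σAlg_bEl (c := fun n ↦ -rhoIter K q n)] at h
  · simpa [rhoIter_self, bEl_pow_self, σAlg_iterate_self, sub_eq_neg_add] using! h
  · simp [rhoIter]
  · intro n
    simp only [rhoIter_succ, map_neg]
    ring

lemma alphaLin_iterate_block_of_odd (hq : (q : K) = 0) (hd : Odd d) {m : ℕ} (hm : m ≤ d / 2)
    (w : GrpAlg K q × GrpAlg K q) :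
    (alphaLin K q d)^[q] (block K q d m w) =
      block K q d m (w.1, w.2 + Nel K q (bEl K q) * w.1) := by
  have h := iterate_apply_of_pascal_of_cast_eq_zero (φ := fun l ↦ block K q d l)
    (fun m _ ↦ alphaLin_block_of_odd hd m) hq (Nat.lt_succ_of_le hm) w
  rw [iterate_triangularTwist σAlg_bEl (map_one _)
    (c := fun n ↦ ∑ t ∈ range n, bEl K q ^ t)] at h
  · simpa [Nel, bEl_pow_self, σAlg_iterate_self, add_comm] using! h
  · simp
  · intro n
    simp [sum_range_succ, σAlg_bEl, add_comm]

lemma delLin_tauLin_zero (hq : (q : K) = 0) (x : PmodV K q 0) :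
    delLin K q 0 (tauLin K q 0 x) = x - (alphaLin K q 0)^[q] x := by
  induction x using block_induction with
  | add x y hx hy => rw [map_add, map_add, hx, hy, iterate_map_add]; abel
  | block m hm w =>
    obtain rfl : m = 0 := by lia
    have hblock : block K q (0 + 1) (((0 : ℕ) : ℤ) + 1) = 0 := block_of_lt (by lia)
    have he : eZ K q 0 1 = 0 := eZ_of_lt (by lia)
    rw [tauLin_block_of_even .zero, hblock, alphaLin_iterate_block_of_even hq .zero hm]
    simp [block_apply, he]

lemma delLin_tauLin_add_tauLin_delLin (hq : (q : K) = 0) (k : ℕ) (x : PmodV K q (k + 1)) :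
    delLin K q (k + 1) (tauLin K q (k + 1) x) + tauLin K q k (delLin K q k x) =
      x - (alphaLin K q (k + 1))^[q] x := by
  induction x using block_induction with
  | add x y hx hy =>
    simp only [map_add, iterate_map_add]
    rw [add_add_add_comm, hx, hy]
    abel
  | block m hm w =>
    obtain hk | hk := k.even_or_odd
    · rw [delLin_tauLin_add_tauLin_delLin_block_of_even hq hk,
        alphaLin_iterate_block_of_odd hq hk.add_one hm, ← map_sub]
      congr 1
      ext1 <;> simp
    · rw [delLin_tauLin_add_tauLin_delLin_block_of_odd hq hk,
        alphaLin_iterate_block_of_even hq hk.add_one hm, ← map_sub]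
      congr 1
      ext1 <;> simp

end Complex

theorem stmt15_general (hq : (q : K) = 0) :
    (∀ x : PmodV K q 0,
      delMap K q 0 (tauMap K q 0 x) = x - (alphaMap K q 0)^[q] x) ∧
    (∀ (k : ℕ) (x : PmodV K q (k + 1)),
      delMap K q (k + 1) (tauMap K q (k + 1) x) + tauMap K q k (delMap K q k x) =
        x - (alphaMap K q (k + 1))^[q] x) :=
  ⟨delLin_tauLin_zero hq, delLin_tauLin_add_tauLin_delLin hq⟩

/-- for an odd prime `p`, `n ≥ 2`, `q = p^n` and `K` of characteristic `p`,
the maps `α` and `τ` satisfy `∂ ∘ τ + τ ∘ ∂ = 1 − α^q` on the complex `P_•` (in degree `0`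
the term `τ ∘ ∂` is interpreted as `0`), where `α^q` is the `q`-fold composite of `α`. -/
theorem stmt15 (p n : ℕ) (hp : p.Prime) (hodd : Odd p) (hn : 2 ≤ n)
    (hchar : CharP K p) (hq : q = p ^ n) :
    (∀ x : PmodV K q 0,
      delMap K q 0 (tauMap K q 0 x) = x - (alphaMap K q 0)^[q] x) ∧
    (∀ (k : ℕ) (x : PmodV K q (k + 1)),
      delMap K q (k + 1) (tauMap K q (k + 1) x) + tauMap K q k (delMap K q k x) =
        x - (alphaMap K q (k + 1))^[q] x) :=
  stmt15_general K q <| by rw [hq, Nat.cast_pow, CharP.cast_eq_zero, zero_pow (by lia)]
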